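/- Fix a ≠ 0. For ω > |a| and θ ∈ ℝ define Φ(ω, θ) = (√((ω² − a²)/(1 + θ²)), θ·√((ω² − a²)/(1 + θ²))), and for (x₁, x₂) ≠ (0,0) define the symmetric 2×2 matrix G̃(x₁, x₂) = (1/(x₁² + x₂² + a²))·[[x₁² + a², x₁x₂], [x₁x₂, x₂² + a²]]. Then at every (ω, θ) with ω > |a|: (DΦ)ᵀ · G̃(Φ(ω,θ)) · (DΦ) = [[ω²/(ω² − a²), 0], [0, a²(ω² − a²)/(ω²(1 + θ²)²)]], where DΦ is the 2×2 Jacobian matrix of Φ. -/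

import Mathlib

open Matrix

/-- The inverse coordinate change `Φ(ω,θ) = (x₁, x₂)` from the orthogonal coordinates
`(ω, θ)` to the invariant coordinates `(x₁, x₂)` of the orbit space of the helicoidal
group with pitch `a`. -/
noncomputable def invCoords (a ω θ : ℝ) : ℝ × ℝ :=
  (Real.sqrt ((ω ^ 2 - a ^ 2) / (1 + θ ^ 2)),
   θ * Real.sqrt ((ω ^ 2 - a ^ 2) / (1 + θ ^ 2)))

/-- The quotient metric of Euclidean `ℝ³` by the helicoidal group with pitch `a`,
in the invariant coordinates `(x₁, x₂)`. -/
noncomputable def quotMetric (a x₁ x₂ : ℝ) : Matrix (Fin 2) (Fin 2) ℝ :=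
  (1 / (x₁ ^ 2 + x₂ ^ 2 + a ^ 2)) •
    !![x₁ ^ 2 + a ^ 2, x₁ * x₂; x₁ * x₂, x₂ ^ 2 + a ^ 2]

/-!
The quotient metric is `(x xᵀ + a² I) / (|x|² + a²)`, so at `x` the radial vector `x` and the
angular vector `x^⊥` are orthogonal eigenvectors of it, with eigenvalues `1` and `a² / (|x|² + a²)`.
Since `ω` is a function of `|x|` alone and `θ` is the slope of the line spanned by `x`, the two
partial derivatives of `Φ` are multiples of exactly these vectors:
`∂Φ/∂ω = ω / (ω² - a²) • Φ` and `∂Φ/∂θ = 1 / (1 + θ²) • Φ^⊥`.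
Hence the metric becomes diagonal, and `|Φ|² = ω² - a²` gives the entries.
-/

/-- The frame at the point `(x₁, x₂)` whose columns are the radial vector `(x₁, x₂)` and the angular
vector `(-x₂, x₁)`, not normalized. It diagonalizes `quotMetric a x₁ x₂`. -/
def polarFrame (x₁ x₂ : ℝ) : Matrix (Fin 2) (Fin 2) ℝ :=
  !![x₁, -x₂; x₂, x₁]

lemma transpose_polarFrame_mul_polarFrame (x₁ x₂ : ℝ) :
    (polarFrame x₁ x₂)ᵀ * polarFrame x₁ x₂ = (x₁ ^ 2 + x₂ ^ 2) • 1 := by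
  ext i j
  fin_cases i <;> fin_cases j <;> simp [polarFrame, Matrix.mul_apply] <;> ring

lemma quotMetric_mul_polarFrame {a x₁ x₂ : ℝ} (h : x₁ ^ 2 + x₂ ^ 2 + a ^ 2 ≠ 0) :
    quotMetric a x₁ x₂ * polarFrame x₁ x₂ =
      polarFrame x₁ x₂ * diagonal ![1, a ^ 2 / (x₁ ^ 2 + x₂ ^ 2 + a ^ 2)] := by
  ext i j
  fin_cases i <;> fin_cases j <;> simp [quotMetric, polarFrame, Matrix.mul_apply] <;>
    field_simp <;> ring

lemma transpose_mul_quotMetric_mul_polarFrame_mul_diagonal {a x₁ x₂ : ℝ}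
    (h : x₁ ^ 2 + x₂ ^ 2 + a ^ 2 ≠ 0) (c : Fin 2 → ℝ) :
    (polarFrame x₁ x₂ * diagonal c)ᵀ * quotMetric a x₁ x₂ * (polarFrame x₁ x₂ * diagonal c) =
      (x₁ ^ 2 + x₂ ^ 2) • diagonal ![c 0 ^ 2, a ^ 2 / (x₁ ^ 2 + x₂ ^ 2 + a ^ 2) * c 1 ^ 2] := by
  set P := polarFrame x₁ x₂
  set eigenvalues : Fin 2 → ℝ := ![1, a ^ 2 / (x₁ ^ 2 + x₂ ^ 2 + a ^ 2)] with h_eigenvalues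
  calc (P * diagonal c)ᵀ * quotMetric a x₁ x₂ * (P * diagonal c)
      = diagonal c * Pᵀ * (quotMetric a x₁ x₂ * P) * diagonal c := by
        simp only [transpose_mul, diagonal_transpose, Matrix.mul_assoc]
    _ = diagonal c * (Pᵀ * P) * diagonal eigenvalues * diagonal c := by
        rw [quotMetric_mul_polarFrame h]
        simp only [Matrix.mul_assoc, P, eigenvalues]
    _ = (x₁ ^ 2 + x₂ ^ 2) • diagonal fun i => c i * eigenvalues i * c i := by
        rw [transpose_polarFrame_mul_polarFrame]
        simp only [Matrix.mul_smul, Matrix.mul_one, Matrix.smul_mul, diagonal_mul_diagonal]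
    _ = (x₁ ^ 2 + x₂ ^ 2) •
          diagonal ![c 0 ^ 2, a ^ 2 / (x₁ ^ 2 + x₂ ^ 2 + a ^ 2) * c 1 ^ 2] := by
        congr 2
        ext i
        fin_cases i <;> simp [h_eigenvalues] <;> ring

lemma invCoords_eq_smul (a ω θ : ℝ) :
    invCoords a ω θ = √(ω ^ 2 - a ^ 2) • (√(1 + θ ^ 2))⁻¹ • ((1, θ) : ℝ × ℝ) := by
  have h : 0 ≤ 1 + θ ^ 2 := by positivity
  ext <;> simp only [invCoords, Real.sqrt_div' _ h, Prod.smul_mk, smul_eq_mul] <;> ring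

lemma invCoords_fst_sq_add_snd_sq {a ω : ℝ} (h : a ^ 2 ≤ ω ^ 2) (θ : ℝ) :
    (invCoords a ω θ).1 ^ 2 + (invCoords a ω θ).2 ^ 2 = ω ^ 2 - a ^ 2 := by
  have h_nonneg : 0 ≤ (ω ^ 2 - a ^ 2) / (1 + θ ^ 2) :=
    div_nonneg (sub_nonneg.mpr h) (by positivity)
  simp only [invCoords, mul_pow, Real.sq_sqrt h_nonneg]
  field_simp

lemma hasDerivAt_invCoords_left {a ω : ℝ} (h : ω ^ 2 - a ^ 2 ≠ 0) (θ : ℝ) :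
    HasDerivAt (fun ω' => invCoords a ω' θ) ((ω / (ω ^ 2 - a ^ 2)) • invCoords a ω θ) ω := by
  have h_radius : HasDerivAt (fun ω' => √(ω' ^ 2 - a ^ 2))
      (ω / (ω ^ 2 - a ^ 2) * √(ω ^ 2 - a ^ 2)) ω := by
    refine (((hasDerivAt_pow 2 ω).sub_const (a ^ 2)).sqrt h).congr_deriv ?_
    rw [div_mul_eq_mul_div, mul_div_assoc ω, Real.sqrt_div_self]
    push_cast
    field_simp
  simpa only [invCoords_eq_smul, smul_smul, mul_assoc] using
    h_radius.smul_const ((√(1 + θ ^ 2))⁻¹ • ((1, θ) : ℝ × ℝ))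

lemma hasDerivAt_invCoords_right (a ω θ : ℝ) :
    HasDerivAt (fun θ' => invCoords a ω θ')
      ((1 / (1 + θ ^ 2)) • (-(invCoords a ω θ).2, (invCoords a ω θ).1)) θ := by
  have hθ : 0 < 1 + θ ^ 2 := by positivity
  have h_scale : HasDerivAt (fun θ' => (√(1 + θ' ^ 2))⁻¹)
      (-θ / (1 + θ ^ 2) * (√(1 + θ ^ 2))⁻¹) θ := by
    refine ((((hasDerivAt_pow 2 θ).const_add 1).sqrt hθ.ne').inv (by positivity)).congr_deriv ?_
    rw [Real.sq_sqrt hθ.le]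
    push_cast
    field_simp
  have h_direction := h_scale.smul ((hasDerivAt_const θ (1 : ℝ)).prodMk (hasDerivAt_id θ))
  simp only [invCoords_eq_smul]
  refine (h_direction.const_smul √(ω ^ 2 - a ^ 2)).congr_deriv ?_
  ext <;> simp only [Prod.smul_mk, Prod.mk_add_mk, smul_eq_mul, id_eq] <;> field_simp <;> ring

lemma jacobian_invCoords_eq {a ω θ : ℝ} (h : ω ^ 2 - a ^ 2 ≠ 0) {J : Matrix (Fin 2) (Fin 2) ℝ}
    (hJω : HasDerivAt (fun ω' => invCoords a ω' θ) (J 0 0, J 1 0) ω)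
    (hJθ : HasDerivAt (fun θ' => invCoords a ω θ') (J 0 1, J 1 1) θ) :
    J = polarFrame (invCoords a ω θ).1 (invCoords a ω θ).2 *
      diagonal ![ω / (ω ^ 2 - a ^ 2), 1 / (1 + θ ^ 2)] := by
  obtain ⟨h₀₀, h₁₀⟩ := Prod.mk.inj (hJω.unique (hasDerivAt_invCoords_left h θ))
  obtain ⟨h₀₁, h₁₁⟩ := Prod.mk.inj (hJθ.unique (hasDerivAt_invCoords_right a ω θ))
  rw [J.eta_fin_two, h₀₀, h₁₀, h₀₁, h₁₁]
  ext i j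
  fin_cases i <;> fin_cases j <;> simp [polarFrame, mul_comm]

/-- In the orthogonal coordinates `(ω, θ)` the quotient metric of the helicoidal group
with pitch `a ≠ 0` takes the diagonal form
`g̃ = ω²/(ω²−a²) dω² + a²(ω²−a²)/(ω²(1+θ²)²) dθ²`:
`(DΦ)ᵀ · G̃(Φ(ω,θ)) · (DΦ) = diag(ω²/(ω²−a²), a²(ω²−a²)/(ω²(1+θ²)²))`. -/
theorem quotMetric_diagonal_in_omega_theta (a : ℝ) (ha : a ≠ 0) :
    ∀ ω θ : ℝ, |a| < ω → ∀ J : Matrix (Fin 2) (Fin 2) ℝ,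
      HasDerivAt (fun ω' => invCoords a ω' θ) (J 0 0, J 1 0) ω →
      HasDerivAt (fun θ' => invCoords a ω θ') (J 0 1, J 1 1) θ →
      Jᵀ * quotMetric a (invCoords a ω θ).1 (invCoords a ω θ).2 * J
        = !![ω ^ 2 / (ω ^ 2 - a ^ 2), 0;
             0, a ^ 2 * (ω ^ 2 - a ^ 2) / (ω ^ 2 * (1 + θ ^ 2) ^ 2)] := by
  intro ω θ hω J hJω hJθ
  have h_sq : a ^ 2 < ω ^ 2 := sq_lt_sq.mpr (hω.trans_le (le_abs_self ω))
  have h_sub : ω ^ 2 - a ^ 2 ≠ 0 := (sub_pos.mpr h_sq).ne'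
  have hω₀ : ω ≠ 0 := ((abs_nonneg a).trans_lt hω).ne'
  have h_norm := invCoords_fst_sq_add_snd_sq h_sq.le θ
  have h_den : (invCoords a ω θ).1 ^ 2 + (invCoords a ω θ).2 ^ 2 + a ^ 2 = ω ^ 2 := by
    rw [h_norm, sub_add_cancel]
  rw [jacobian_invCoords_eq h_sub hJω hJθ,
    transpose_mul_quotMetric_mul_polarFrame_mul_diagonal (h_den ▸ pow_ne_zero 2 hω₀),
    h_den, h_norm]
  ext i j
  fin_cases i <;> fin_cases j <;> simp <;> field_simp
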